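/- Let R ≥ 1 be an integer. For k = 2, the matrix integral satisfies: I_2(n;R) = C(n + 3, 3) for all integers n with 0 ≤ n ≤ R, and I_2(n;R) = C(2R − n + 3, 3) for all integers n with R < n < 2R. -/

import Mathlib

open MeasureTheory Polynomial

noncomputable instance (R : ℕ) : MeasurableSpace (Matrix.unitaryGroup (Fin R) ℂ) := borel _
instance (R : ℕ) : BorelSpace (Matrix.unitaryGroup (Fin R) ℂ) := ⟨rfl⟩

/-- The trace of the `j`-th exterior power of `θ`, i.e. the coefficient of `T^j` in
`det(I + T·θ)`. -/
noncomputable def extPowTrace (R : ℕ) (θ : Matrix.unitaryGroup (Fin R) ℂ) (j : ℕ) : ℂ :=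
  ((1 + (X : ℂ[X]) • (θ : Matrix (Fin R) (Fin R) ℂ).map C).det).coeff j

/-- The matrix integral `I_k(n;R)`: the integral over the unitary group `U(R)` of
`|∑_{n₁+⋯+n_k=n} ∏ᵢ Tr(Λ^{nᵢ} θ)|²`, with respect to the measure `μ` (which in the
theorems below is assumed to be the Haar probability measure). The summands with some
`nᵢ > R` vanish, since `det(I + T·θ)` has degree `R`. -/
noncomputable def matrixIntegral (k n R : ℕ)
    (μ : Measure (Matrix.unitaryGroup (Fin R) ℂ)) : ℝ :=
  ∫ θ, ‖∑ x ∈ Finset.Nat.antidiagonalTuple k n, ∏ i, extPowTrace R θ (x i)‖ ^ 2 ∂μ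

/-!
The `n`-th coefficient of `det (1 + T θ) ^ k = det (1 + T (θ ⊗ 1_k))` is `1 / n!` times the sum over
the permutations `σ` of `n` letters of `sign σ * k ^ c(σ) * tr (σ θ^{⊗ n})`, where `c(σ)` is the
number of cycles of `σ`. Averaging over the unitary group projects onto the commutant of the tensor
power, which is spanned by the permutations; for `n ≤ R` these are linearly independent, and since
`sign σ * k ^ c(σ)` is a class function, the mean square of the sum is `n!` times the sum of the
`k ^ (2 c(σ))`. As `k ^ (2 c(σ))` counts the colourings of the `n` letters by pairs of colours that
`σ` fixes, Burnside's lemma turns the latter sum into `n!` times the number of multisets of `n`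
pairs of colours. The functional equation of the characteristic polynomial of a unitary matrix
exchanges `n` and `k R - n`.
-/

section Permutations

variable {ν κ : Type*} [Fintype ν]

lemma exists_perm_comp_eq_iff {β : Type*} [DecidableEq β] {v w : ν → β} :
    (∃ σ : Equiv.Perm ν, w ∘ σ = v) ↔
      ∀ b, Fintype.card {s // v s = b} = Fintype.card {s // w s = b} := by
  constructor
  · rintro ⟨σ, rfl⟩ b
    exact Fintype.card_congr (σ.subtypeEquiv fun _ => Iff.rfl)
  · intro h
    exact ⟨Equiv.ofFiberEquiv fun b => Fintype.equivOfCardEq (h b),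
      funext (Equiv.ofFiberEquiv_map _)⟩

lemma exists_perm_comp_eq_iff_map_val_eq {β : Type*} {v w : ν → β} :
    (∃ σ : Equiv.Perm ν, w ∘ σ = v) ↔
      (Finset.univ.val.map v : Multiset β) = Finset.univ.val.map w := by
  classical
  simp only [exists_perm_comp_eq_iff, Multiset.ext, Multiset.count_map, Fintype.card_subtype,
    eq_comm (a := (_ : β))]
  rfl

variable (ν κ) in
/-- Functions `ν → κ` up to permutation of `ν`, identified with the multisets of their values. -/
noncomputable def orbitEquivSym :
    MulAction.orbitRel.Quotient (Equiv.Perm ν)ᵈᵐᵃ (ν → κ) ≃ Sym κ (Fintype.card ν) := by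
  have orbitRel_iff (v w : ν → κ) : MulAction.orbitRel (Equiv.Perm ν)ᵈᵐᵃ (ν → κ) v w ↔
      (Finset.univ.val.map v : Multiset κ) = Finset.univ.val.map w := by
    rw [← exists_perm_comp_eq_iff_map_val_eq]
    exact ⟨fun ⟨g, hg⟩ => ⟨DomMulAct.mk.symm g, hg⟩, fun ⟨σ, hσ⟩ => ⟨DomMulAct.mk σ, hσ⟩⟩
  refine Equiv.ofBijective (Quotient.lift (fun v => ⟨Finset.univ.val.map v, by simp⟩)
    fun v w h => Subtype.ext ((orbitRel_iff v w).1 h)) ⟨?_, ?_⟩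
  · rintro ⟨v⟩ ⟨w⟩ h
    exact Quotient.sound ((orbitRel_iff v w).2 (congrArg Subtype.val h))
  · rintro ⟨⟨l⟩, hl⟩
    let e : ν ≃ Fin l.length := Fintype.equivFinOfCardEq hl.symm
    refine ⟨⟦l.get ∘ e⟧, Subtype.ext ?_⟩
    change Finset.univ.val.map (l.get ∘ e) = l
    rw [← Multiset.map_map, Multiset.map_univ_val_equiv, Fin.univ_val_map, List.ofFn_get]

variable [DecidableEq ν] [Fintype κ] [DecidableEq κ]

variable (ν κ) in
lemma sum_card_comp_perm_eq_self :
    ∑ σ : Equiv.Perm ν, Fintype.card {w : ν → κ // w ∘ σ = w} =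
      (Fintype.card κ).multichoose (Fintype.card ν) * (Fintype.card ν).factorial := by
  classical
  let := Fintype.ofEquiv (Equiv.Perm ν) DomMulAct.mk
  have : Fintype (Quotient (MulAction.orbitRel (Equiv.Perm ν)ᵈᵐᵃ (ν → κ))) :=
    Fintype.ofEquiv _ (orbitEquivSym ν κ).symm
  have burnside := MulAction.sum_card_fixedBy_eq_card_orbits_mul_card_group
    (Equiv.Perm ν)ᵈᵐᵃ (ν → κ)
  rw [Fintype.card_congr (orbitEquivSym ν κ), Sym.card_sym_eq_multichoose,
    ← Fintype.card_congr DomMulAct.mk, Fintype.card_perm] at burnside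
  rw [← burnside]
  exact Fintype.sum_equiv DomMulAct.mk _ _ fun σ => Fintype.card_congr (Equiv.refl _)

end Permutations

section TensorPower

variable {ν ι κ α β : Type*} [Fintype ν] [DecidableEq ν] [Fintype ι] [DecidableEq ι]
  [Fintype κ] [DecidableEq κ] [CommSemiring α] [CommSemiring β]

variable (ν) in
/-- The tensor power `A ⊗ ⋯ ⊗ A`, with factors indexed by `ν`, in the basis of multi-indices
`ν → ι`. -/
def tensorPow : Matrix ι ι α →* Matrix (ν → ι) (ν → ι) α where
  toFun A := Matrix.of fun I J => ∏ s, A (I s) (J s)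
  map_one' := by
    ext I J
    simp [Matrix.one_apply, Fintype.prod_boole, funext_iff]
  map_mul' A B := by
    ext I J
    simp [Matrix.mul_apply, Finset.prod_univ_sum, Fintype.piFinset_univ, Finset.prod_mul_distrib]

lemma tensorPow_apply (A : Matrix ι ι α) (I J : ν → ι) :
    tensorPow ν A I J = ∏ s, A (I s) (J s) := rfl

lemma tensorPow_submatrix (A : Matrix ι ι α) (f g : ι → ι) :
    tensorPow ν (A.submatrix f g) = (tensorPow ν A).submatrix (f ∘ ·) (g ∘ ·) := rfl

lemma tensorPow_map (A : Matrix ι ι α) (f : α →+* β) :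
    tensorPow ν (A.map f) = (tensorPow ν A).map f := by
  ext I J
  simp [tensorPow_apply]

lemma tensorPow_diagonal (d : ι → α) :
    tensorPow ν (Matrix.diagonal d) = Matrix.diagonal fun I => ∏ s, d (I s) := by
  ext I J
  by_cases h : I = J
  · subst h
    simp [tensorPow_apply]
  · obtain ⟨s, hs⟩ := Function.ne_iff.1 h
    rw [Matrix.diagonal_apply_ne _ h, tensorPow_apply]
    exact Finset.prod_eq_zero (Finset.mem_univ s) (Matrix.diagonal_apply_ne _ hs)

open scoped Matrix in
lemma tensorPow_conjTranspose [StarRing α] (A : Matrix ι ι α) :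
    tensorPow ν Aᴴ = (tensorPow ν A)ᴴ := by
  ext I J
  simp [tensorPow_apply]

variable (ν ι α) in
/-- The action of the permutations of the tensor factors on the tensor power indexed by `ν`. -/
def tensorPerm : Equiv.Perm ν →* Matrix (ν → ι) (ν → ι) α where
  toFun σ := Matrix.of fun I J => if I ∘ σ = J then 1 else 0
  map_one' := by
    ext I J
    simp [Matrix.one_apply]
  map_mul' σ τ := by
    ext I J
    simp only [Matrix.mul_apply, Matrix.of_apply, ite_mul, one_mul, zero_mul, Finset.sum_ite_eq,
      Finset.mem_univ, if_true]
    rfl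

lemma tensorPerm_apply (σ : Equiv.Perm ν) (I J : ν → ι) :
    tensorPerm ν ι α σ I J = if I ∘ σ = J then 1 else 0 := rfl

lemma tensorPerm_mul_apply (σ : Equiv.Perm ν) (M : Matrix (ν → ι) (ν → ι) α) (I J : ν → ι) :
    (tensorPerm ν ι α σ * M) I J = M (I ∘ σ) J := by
  simp [Matrix.mul_apply, tensorPerm_apply]

open scoped Matrix in
lemma tensorPerm_conjTranspose [StarRing α] (σ : Equiv.Perm ν) :
    (tensorPerm ν ι α σ)ᴴ = tensorPerm ν ι α σ⁻¹ := by
  ext I J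
  have h : J ∘ σ = I ↔ I ∘ σ.symm = J := by
    rw [Equiv.comp_symm_eq, eq_comm]
  simp only [Matrix.conjTranspose_apply, tensorPerm_apply, h, apply_ite star, star_one, star_zero,
    Equiv.Perm.inv_def]

lemma commute_tensorPerm_tensorPow (σ : Equiv.Perm ν) (A : Matrix ι ι α) :
    Commute (tensorPerm ν ι α σ) (tensorPow ν A) := by
  ext I J
  have h (K : ν → ι) : K ∘ σ = J ↔ K = J ∘ σ.symm := (Equiv.eq_comp_symm ..).symm
  simp only [Matrix.mul_apply, tensorPerm_apply, ite_mul, one_mul, zero_mul, mul_ite, mul_one,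
    mul_zero, h, Finset.sum_ite_eq, Finset.sum_ite_eq', Finset.mem_univ, if_true, tensorPow_apply,
    Function.comp_apply]
  simpa using Equiv.prod_comp σ fun s => A (I s) (J (σ.symm s))

/-- The trace of a permutation composed with a tensor power, that is, the product of
`tr (A ^ l)` over the lengths `l` of the cycles of `σ`. -/
def permTrace (A : Matrix ι ι α) (σ : Equiv.Perm ν) : α :=
  (tensorPerm ν ι α σ * tensorPow ν A).trace

lemma permTrace_eq_sum (A : Matrix ι ι α) (σ : Equiv.Perm ν) :
    permTrace A σ = ∑ I : ν → ι, ∏ s, A (I (σ s)) (I s) := by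
  simp [permTrace, Matrix.trace, tensorPerm_mul_apply, tensorPow_apply]

lemma permTrace_conj (A : Matrix ι ι α) (ρ σ : Equiv.Perm ν) :
    permTrace A (ρ * σ * ρ⁻¹) = permTrace A σ := by
  rw [permTrace, map_mul, mul_assoc, (commute_tensorPerm_tensorPow ρ⁻¹ A).eq, ← mul_assoc,
    Matrix.trace_mul_comm, ← mul_assoc, ← map_mul, ← mul_assoc, inv_mul_cancel, one_mul, permTrace]

open scoped Kronecker in
lemma permTrace_kronecker (A : Matrix ι ι α) (B : Matrix κ κ α) (σ : Equiv.Perm ν) :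
    permTrace (A ⊗ₖ B) σ = permTrace A σ * permTrace B σ := by
  simp only [permTrace_eq_sum, Matrix.kroneckerMap_apply, Finset.prod_mul_distrib,
    Finset.sum_mul_sum, ← Fintype.sum_prod_type']
  exact Fintype.sum_equiv (Equiv.arrowProdEquivProdArrow _ _ _) _ _ fun _ => rfl

lemma permTrace_one (σ : Equiv.Perm ν) :
    permTrace (1 : Matrix ι ι α) σ = Fintype.card {w : ν → ι // w ∘ σ = w} := by
  simp [permTrace, Matrix.trace, tensorPerm_apply, Fintype.card_subtype]

variable (ν ι α) in
lemma sum_permTrace_one_sq :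
    ∑ σ : Equiv.Perm ν, permTrace (1 : Matrix ι ι α) σ ^ 2 =
      (Fintype.card ι ^ 2).multichoose (Fintype.card ν) * (Fintype.card ν).factorial := by
  have h (σ : Equiv.Perm ν) : permTrace (1 : Matrix ι ι α) σ ^ 2 =
      Fintype.card {w : ν → ι × ι // w ∘ σ = w} := by
    rw [sq, ← permTrace_kronecker, Matrix.one_kronecker_one, permTrace_one]
  rw [Finset.sum_congr rfl fun σ _ => h σ, ← Nat.cast_sum, sum_card_comp_perm_eq_self,
    Fintype.card_prod, sq, Nat.cast_mul]

end TensorPower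

section Commutant

variable {ν ι : Type*} [Fintype ν] [DecidableEq ν] [Fintype ι] [DecidableEq ι]

/-- `B` lies in the commutant of the action of the unitary group on the tensor power indexed
by `ν`. -/
def InUnitaryCommutant (B : Matrix (ν → ι) (ν → ι) ℂ) : Prop :=
  ∀ U ∈ Matrix.unitaryGroup ι ℂ, Commute B (tensorPow ν U)

lemma diagonal_mem_unitaryGroup {d : ι → ℂ} (hd : ∀ i, ‖d i‖ = 1) :
    Matrix.diagonal d ∈ Matrix.unitaryGroup ι ℂ := by
  rw [Matrix.mem_unitaryGroup_iff, Matrix.star_eq_conjTranspose, Matrix.diagonal_conjTranspose,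
    Matrix.diagonal_mul_diagonal, ← Matrix.diagonal_one]
  congr 1
  funext i
  simp [Complex.mul_conj, Complex.normSq_eq_norm_sq, hd]

namespace InUnitaryCommutant

variable {B : Matrix (ν → ι) (ν → ι) ℂ}

lemma exists_perm_of_apply_ne_zero (hB : InUnitaryCommutant B) {I J : ν → ι} (h : B I J ≠ 0) :
    ∃ σ : Equiv.Perm ν, I ∘ σ = J := by
  rw [exists_perm_comp_eq_iff]
  intro r
  have hζ := Complex.isPrimitiveRoot_exp (Fintype.card ν + 1) (Nat.succ_ne_zero _)
  set ζ := Complex.exp (2 * Real.pi * Complex.I / (Fintype.card ν + 1 : ℕ))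
  let d : ι → ℂ := Function.update 1 r ζ
  have hd (i : ι) : ‖d i‖ = 1 := by
    obtain rfl | hi := eq_or_ne i r
    · simpa [d] using hζ.norm'_eq_one (Nat.succ_ne_zero _)
    · simp [d, hi]
  have hprod (K : ν → ι) : ∏ s, d (K s) = ζ ^ Fintype.card {s // K s = r} := by
    simp [d, Function.update_apply, Finset.prod_ite, Fintype.card_subtype]
  have hcomm := congrFun₂ (hB _ (diagonal_mem_unitaryGroup hd)).eq I J
  rw [tensorPow_diagonal, Matrix.mul_diagonal, Matrix.diagonal_mul, mul_comm, hprod, hprod] at hcomm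
  have hlt (K : ν → ι) : Fintype.card {s // K s = r} < Fintype.card ν + 1 :=
    Nat.lt_succ_of_le (Fintype.card_subtype_le _)
  exact hζ.pow_inj (hlt J) (hlt I) (mul_right_cancel₀ h hcomm)

lemma commute_diagonal (hB : InUnitaryCommutant B) (d : ι → ℂ) :
    Commute B (tensorPow ν (Matrix.diagonal d)) := by
  rw [tensorPow_diagonal]
  ext I J
  rw [Matrix.mul_diagonal, Matrix.diagonal_mul, mul_comm]
  by_cases h : B I J = 0
  · simp [h]
  · obtain ⟨σ, rfl⟩ := hB.exists_perm_of_apply_ne_zero h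
    exact congrArg (· * _) (Equiv.prod_comp σ fun s => d (I s))

lemma commute_isHermitian (hB : InUnitaryCommutant B) {H : Matrix ι ι ℂ} (hH : H.IsHermitian) :
    Commute B (tensorPow ν H) := by
  rw [hH.spectral_theorem, Unitary.conjStarAlgAut_apply, map_mul, map_mul]
  exact ((hB _ hH.eigenvectorUnitary.2).mul_right (hB.commute_diagonal _)).mul_right
    (hB _ (star hH.eigenvectorUnitary).2)

-- For Hermitian `H` and `K`, commuting with the tensor power of `H + z • K` is a polynomial
-- condition on `z`, which holds for real `z`, hence also for `z = Complex.I`.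
lemma commute (hB : InUnitaryCommutant B) (A : Matrix ι ι ℂ) : Commute B (tensorPow ν A) := by
  obtain ⟨H, K, hH, hK, rfl⟩ : ∃ H K : Matrix ι ι ℂ, H.IsHermitian ∧ K.IsHermitian ∧
      H + Complex.I • K = A :=
    ⟨realPart A, imaginaryPart A, (realPart A).2, (imaginaryPart A).2,
      realPart_add_I_smul_imaginaryPart A⟩
  let T : Matrix (ν → ι) (ν → ι) ℂ[X] := tensorPow ν (H.map C + (X : ℂ[X]) • K.map C)
  have eval_T (z : ℂ) : T.map (evalRingHom z) = tensorPow ν (H + z • K) := by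
    rw [← tensorPow_map]
    congr 1
    ext i j
    simp [mul_comm z]
  have eval_B (z : ℂ) : (B.map C).map (evalRingHom z) = B := by
    ext I J
    simp
  have commute_of_real (x : ℝ) : Commute B (tensorPow ν (H + (x : ℂ) • K)) :=
    hB.commute_isHermitian (hH.add (hK.smul (Complex.conj_ofReal x)))
  have hT : B.map C * T = T * B.map C := by
    ext1 I J
    refine Polynomial.eq_of_infinite_eval_eq _ _
      ((Set.infinite_range_of_injective Complex.ofReal_injective).mono ?_)
    rintro _ ⟨x, rfl⟩
    have h := (commute_of_real x).eq
    rw [← eval_T, ← eval_B x, ← Matrix.map_mul, ← Matrix.map_mul] at h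
    exact congrFun₂ h I J
  have h := congrArg (Matrix.map · (evalRingHom Complex.I)) hT
  simpa only [Matrix.map_mul, eval_T, eval_B, commute_iff_eq] using h

-- With `A` sending the basis vector `e s` to `I s`, compare the entries at `(e, J)` of
-- `tensorPow ν A * B` and `B * tensorPow ν A`.
theorem eq_sum_smul_tensorPerm (hB : InUnitaryCommutant B) {e : ν → ι} (he : Function.Injective e) :
    B = ∑ ρ : Equiv.Perm ν, B e (e ∘ ρ) • tensorPerm ν ι ℂ ρ := by
  ext I J
  let f : ι → ι := Function.extend e I id
  have hf (s : ν) : f (e s) = I s := he.extend_apply I id s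
  let A : Matrix ι ι ℂ := (1 : Matrix ι ι ℂ).submatrix f id
  have hA : tensorPow ν A = (1 : Matrix (ν → ι) (ν → ι) ℂ).submatrix (f ∘ ·) id := by
    rw [tensorPow_submatrix, map_one]
    rfl
  have hinj : Function.Injective fun ρ : Equiv.Perm ν => e ∘ ρ := fun ρ τ h =>
    Equiv.ext fun s => he (congrFun h s)
  calc B I J = (tensorPow ν A * B) e J := by
        simp [hA, Matrix.mul_apply, Matrix.one_apply, Function.comp_def, hf]
    _ = (B * tensorPow ν A) e J := by rw [(hB.commute A).eq]
    _ = ∑ ρ : Equiv.Perm ν, B e (e ∘ ρ) * tensorPow ν A (e ∘ ρ) J := by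
        symm
        refine Fintype.sum_of_injective _ hinj _ _ (fun K hK => ?_) fun _ => rfl
        by_contra h
        exact hK (hB.exists_perm_of_apply_ne_zero (left_ne_zero_of_mul h))
    _ = (∑ ρ : Equiv.Perm ν, B e (e ∘ ρ) • tensorPerm ν ι ℂ ρ) I J := by
        simp [hA, Matrix.sum_apply, tensorPerm_apply, Matrix.one_apply, Function.comp_def, hf]

end InUnitaryCommutant

end Commutant

section Moments

open scoped Matrix Matrix.Norms.L2Operator

variable {ν ι : Type*} [Fintype ν] [DecidableEq ν] [Fintype ι] [DecidableEq ι]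

instance compactSpace_unitaryGroup : CompactSpace (Matrix.unitaryGroup ι ℂ) := by
  refine isCompact_iff_compactSpace.1 (Metric.isCompact_of_isClosed_isBounded isClosed_unitary ?_)
  refine isBounded_iff_forall_norm_le.2 ⟨1, fun U hU => ?_⟩
  cases subsingleton_or_nontrivial (Matrix ι ι ℂ)
  · simp [Subsingleton.elim U 0]
  · exact (CStarRing.norm_of_mem_unitary hU).le

lemma continuous_tensorPow : Continuous (tensorPow ν : Matrix ι ι ℂ →* _) :=
  continuous_matrix fun I J =>
    continuous_finsetProd _ fun s _ => continuous_id.matrix_elem (I s) (J s)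

lemma continuous_permTrace (σ : Equiv.Perm ν) :
    Continuous fun A : Matrix ι ι ℂ => permTrace A σ :=
  (continuous_const.mul continuous_tensorPow).matrix_trace

lemma tensorPow_mem_unitaryGroup {U : Matrix ι ι ℂ} (hU : U ∈ Matrix.unitaryGroup ι ℂ) :
    tensorPow ν U ∈ Matrix.unitaryGroup (ν → ι) ℂ := by
  rw [Matrix.mem_unitaryGroup_iff, Matrix.star_eq_conjTranspose, ← tensorPow_conjTranspose,
    ← map_mul, ← Matrix.star_eq_conjTranspose, Matrix.mem_unitaryGroup_iff.1 hU, map_one]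

lemma inUnitaryCommutant_tensorPerm (σ : Equiv.Perm ν) :
    InUnitaryCommutant (tensorPerm ν ι ℂ σ) :=
  fun U _ => commute_tensorPerm_tensorPow σ U

lemma trace_mul_star_trace {n α : Type*} [Fintype n] [DecidableEq n] [CommSemiring α] [StarRing α]
    (A B : Matrix n n α) :
    A.trace * star B.trace = ∑ K, ∑ L, (A * Matrix.single K L 1 * Bᴴ : Matrix n n α) K L := by
  simp only [Matrix.trace, Matrix.diag_apply, star_sum, Finset.sum_mul_sum]
  refine Finset.sum_congr rfl fun K _ => Finset.sum_congr rfl fun L _ => ?_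
  simp [Matrix.mul_apply, Matrix.single_apply, ite_and]

variable [MeasurableSpace (Matrix.unitaryGroup ι ℂ)] [BorelSpace (Matrix.unitaryGroup ι ℂ)]

lemma integrable_of_continuous_unitaryGroup {E : Type*} [NormedAddCommGroup E]
    {F : Matrix.unitaryGroup ι ℂ → E} (hF : Continuous F) (μ : Measure (Matrix.unitaryGroup ι ℂ))
    [IsFiniteMeasure μ] : Integrable F μ :=
  hF.integrable_of_hasCompactSupport (.of_compactSpace F)

variable (μ : Measure (Matrix.unitaryGroup ι ℂ))

lemma integrable_tensorPow_conj [IsFiniteMeasure μ] (X : Matrix (ν → ι) (ν → ι) ℂ) :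
    Integrable (fun θ : Matrix.unitaryGroup ι ℂ => tensorPow ν θ.1 * X * (tensorPow ν θ.1)ᴴ) μ := by
  have h : Continuous fun θ : Matrix.unitaryGroup ι ℂ => tensorPow ν θ.1 :=
    continuous_tensorPow.comp continuous_subtype_val
  exact integrable_of_continuous_unitaryGroup
    ((h.mul continuous_const).mul h.matrix_conjTranspose) μ

/-- The average of the conjugates of a matrix by the tensor powers of a random unitary matrix. -/
noncomputable def twirl [IsFiniteMeasure μ] :
    Matrix (ν → ι) (ν → ι) ℂ →ₗ[ℂ] Matrix (ν → ι) (ν → ι) ℂ where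
  toFun X := ∫ θ, tensorPow ν θ.1 * X * (tensorPow ν θ.1)ᴴ ∂μ
  map_add' X Y := by
    simp only [mul_add, add_mul]
    exact integral_add (integrable_tensorPow_conj μ X) (integrable_tensorPow_conj μ Y)
  map_smul' c X := by
    simp only [Matrix.mul_smul, Matrix.smul_mul, RingHom.id_apply]
    exact integral_smul c _

lemma twirl_apply [IsFiniteMeasure μ] (X : Matrix (ν → ι) (ν → ι) ℂ) :
    twirl μ X = ∫ θ, tensorPow ν θ.1 * X * (tensorPow ν θ.1)ᴴ ∂μ := rfl

lemma map_twirl [IsFiniteMeasure μ] {E : Type*} [NormedAddCommGroup E] [NormedSpace ℂ E]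
    [CompleteSpace E] (φ : Matrix (ν → ι) (ν → ι) ℂ →ₗ[ℂ] E) (X : Matrix (ν → ι) (ν → ι) ℂ) :
    φ (twirl μ X) = ∫ θ, φ (tensorPow ν θ.1 * X * (tensorPow ν θ.1)ᴴ) ∂μ :=
  (φ.toContinuousLinearMap.integral_comp_comm (integrable_tensorPow_conj μ X)).symm

lemma inUnitaryCommutant_twirl [IsFiniteMeasure μ] [μ.IsMulLeftInvariant]
    (X : Matrix (ν → ι) (ν → ι) ℂ) :
    InUnitaryCommutant (twirl μ X) := by
  intro U hU
  let F (θ : Matrix.unitaryGroup ι ℂ) := tensorPow ν θ.1 * X * (tensorPow ν θ.1)ᴴ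
  have hconj : tensorPow ν U * twirl μ X * (tensorPow ν U)ᴴ = twirl μ X := calc
    _ = ∫ θ, tensorPow ν U * F θ * (tensorPow ν U)ᴴ ∂μ :=
      map_twirl μ (LinearMap.mulRight ℂ (tensorPow ν U)ᴴ ∘ₗ LinearMap.mulLeft ℂ (tensorPow ν U)) X
    _ = ∫ θ, F (⟨U, hU⟩ * θ) ∂μ := by
      simp only [F, Submonoid.coe_mul, map_mul, Matrix.conjTranspose_mul, mul_assoc]
    _ = twirl μ X := by rw [integral_mul_left_eq_self, twirl_apply]
  have hunit := Matrix.mem_unitaryGroup_iff'.1 (tensorPow_mem_unitaryGroup (ν := ν) hU)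
  rw [commute_iff_eq]
  nth_rewrite 1 [← hconj]
  rw [mul_assoc, ← Matrix.star_eq_conjTranspose, hunit, mul_one]

lemma twirl_eq_self [IsProbabilityMeasure μ] {X : Matrix (ν → ι) (ν → ι) ℂ}
    (hX : InUnitaryCommutant X) : twirl μ X = X := by
  have h (θ : Matrix.unitaryGroup ι ℂ) : tensorPow ν θ.1 * X * (tensorPow ν θ.1)ᴴ = X := by
    rw [← (hX θ θ.2).eq, mul_assoc, ← Matrix.star_eq_conjTranspose,
      Matrix.mem_unitaryGroup_iff.1 (tensorPow_mem_unitaryGroup θ.2), mul_one]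
  simp [twirl_apply, h]

lemma sum_smul_twirl_single [IsFiniteMeasure μ] (X : Matrix (ν → ι) (ν → ι) ℂ) :
    ∑ K, ∑ L, X K L • twirl μ (Matrix.single K L 1) = twirl μ X := by
  conv_rhs => rw [Matrix.matrix_eq_sum_single X]
  simp only [map_sum, ← map_smul, Matrix.smul_single, smul_eq_mul, mul_one]

lemma integral_trace_mul_star_trace [IsFiniteMeasure μ] (A B : Matrix (ν → ι) (ν → ι) ℂ) :
    ∫ θ : Matrix.unitaryGroup ι ℂ,
        (A * tensorPow ν θ.1).trace * star (B * tensorPow ν θ.1).trace ∂μ =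
      ∑ K : ν → ι, ∑ L : ν → ι, (A * twirl μ (Matrix.single K L 1) * Bᴴ) K L := by
  let φ (K L : ν → ι) : Matrix (ν → ι) (ν → ι) ℂ →ₗ[ℂ] ℂ :=
    Matrix.entryLinearMap ℂ ℂ K L ∘ₗ LinearMap.mulRight ℂ Bᴴ ∘ₗ LinearMap.mulLeft ℂ A
  let F (K L : ν → ι) (θ : Matrix.unitaryGroup ι ℂ) : Matrix (ν → ι) (ν → ι) ℂ :=
    tensorPow ν θ.1 * Matrix.single K L 1 * (tensorPow ν θ.1)ᴴ
  have trace_eq (θ : Matrix.unitaryGroup ι ℂ) :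
      (A * tensorPow ν θ.1).trace * star (B * tensorPow ν θ.1).trace =
        ∑ K, ∑ L, φ K L (F K L θ) := by
    rw [trace_mul_star_trace]
    simp [φ, F, Matrix.conjTranspose_mul, mul_assoc]
  have integrable_φ (K L : ν → ι) : Integrable (fun θ => φ K L (F K L θ)) μ :=
    (φ K L).toContinuousLinearMap.integrable_comp (integrable_tensorPow_conj μ _)
  simp_rw [trace_eq]
  rw [integral_finsetSum _ fun K _ => integrable_finsetSum _ fun L _ => integrable_φ K L]
  refine Finset.sum_congr rfl fun K _ => ?_
  rw [integral_finsetSum _ fun L _ => integrable_φ K L]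
  exact Finset.sum_congr rfl fun L _ => (map_twirl μ (φ K L) _).symm

theorem integral_permTrace_mul_star_permTrace [IsProbabilityMeasure μ] [μ.IsMulLeftInvariant]
    (hcard : Fintype.card ν ≤ Fintype.card ι) (σ τ : Equiv.Perm ν) :
    ∫ θ : Matrix.unitaryGroup ι ℂ, permTrace θ.1 σ * star (permTrace θ.1 τ) ∂μ =
      ∑ ρ : Equiv.Perm ν, if ρ * τ * ρ⁻¹ = σ then 1 else 0 := by
  obtain ⟨e, he⟩ := Function.Embedding.nonempty_of_card_le hcard
  let P := tensorPerm ν ι ℂ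
  have apply_mul_twirl_mul (X : Matrix (ν → ι) (ν → ι) ℂ) (K L : ν → ι) :
      (P σ * twirl μ X * P τ⁻¹) K L =
        ∑ ρ : Equiv.Perm ν, P (σ * ρ * τ⁻¹) K L * twirl μ X e (e ∘ ρ) := by
    conv_lhs => rw [(inUnitaryCommutant_twirl μ X).eq_sum_smul_tensorPerm he]
    simp [Finset.mul_sum, Finset.sum_mul, Matrix.sum_apply, P, mul_comm]
  calc
    _ = ∑ K : ν → ι, ∑ L : ν → ι, (P σ * twirl μ (Matrix.single K L 1) * P τ⁻¹) K L := by
      simp only [permTrace, P, ← tensorPerm_conjTranspose]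
      exact integral_trace_mul_star_trace μ _ _
    _ = ∑ ρ : Equiv.Perm ν, twirl μ (P (σ * ρ * τ⁻¹)) e (e ∘ ρ) := by
      simp only [apply_mul_twirl_mul, ← sum_smul_twirl_single μ (P _), Matrix.sum_apply,
        Matrix.smul_apply, smul_eq_mul]
      exact Finset.sum_comm_cycle
    _ = ∑ ρ : Equiv.Perm ν, if ρ * τ * ρ⁻¹ = σ then 1 else 0 := by
      refine Finset.sum_congr rfl fun ρ _ => ?_
      have h : e ∘ (σ * ρ * τ⁻¹ : Equiv.Perm ν) = e ∘ ρ ↔ ρ * τ * ρ⁻¹ = σ := by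
        rw [he.comp_left.eq_iff, DFunLike.coe_injective.eq_iff, mul_inv_eq_iff_eq_mul,
          mul_inv_eq_iff_eq_mul, eq_comm]
      rw [twirl_eq_self μ (inUnitaryCommutant_tensorPerm _), tensorPerm_apply, if_congr h rfl rfl]

theorem integral_norm_sq_sum_mul_permTrace [IsProbabilityMeasure μ] [μ.IsMulLeftInvariant]
    (hcard : Fintype.card ν ≤ Fintype.card ι) {f : Equiv.Perm ν → ℂ}
    (hf : ∀ ρ σ, f (ρ * σ * ρ⁻¹) = f σ) :
    ∫ θ : Matrix.unitaryGroup ι ℂ, ‖∑ σ, f σ * permTrace θ.1 σ‖ ^ 2 ∂μ =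
      (Fintype.card ν).factorial * ∑ σ, ‖f σ‖ ^ 2 := by
  have norm_sq_eq (θ : Matrix.unitaryGroup ι ℂ) :
      ((‖∑ σ, f σ * permTrace θ.1 σ‖ ^ 2 : ℝ) : ℂ) =
        ∑ σ, ∑ τ, f σ * star (f τ) * (permTrace θ.1 σ * star (permTrace θ.1 τ)) := by
    rw [Complex.ofReal_pow, ← Complex.mul_conj', map_sum, Finset.sum_mul_sum]
    simp only [map_mul, starRingEnd_apply, mul_mul_mul_comm]
  have integrable_term (σ τ : Equiv.Perm ν) : Integrable (fun θ : Matrix.unitaryGroup ι ℂ =>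
      f σ * star (f τ) * (permTrace θ.1 σ * star (permTrace θ.1 τ))) μ := by
    have h (σ : Equiv.Perm ν) : Continuous fun θ : Matrix.unitaryGroup ι ℂ => permTrace θ.1 σ :=
      (continuous_permTrace σ).comp continuous_subtype_val
    exact integrable_of_continuous_unitaryGroup
      (continuous_const.mul ((h σ).mul (h τ).star)) μ
  apply Complex.ofReal_injective
  calc
    _ = ∑ σ, ∑ τ, f σ * star (f τ) * ∑ ρ : Equiv.Perm ν, if ρ * τ * ρ⁻¹ = σ then 1 else 0 := by
      rw [← integral_complex_ofReal]
      simp_rw [norm_sq_eq]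
      rw [integral_finsetSum _ fun σ _ => integrable_finsetSum _ fun τ _ => integrable_term σ τ]
      refine Finset.sum_congr rfl fun σ _ => ?_
      rw [integral_finsetSum _ fun τ _ => integrable_term σ τ]
      simp only [integral_const_mul, integral_permTrace_mul_star_permTrace μ hcard]
    _ = ∑ τ, ∑ ρ : Equiv.Perm ν, f (ρ * τ * ρ⁻¹) * star (f τ) := by
      simp only [Finset.mul_sum]
      rw [Finset.sum_comm]
      refine Finset.sum_congr rfl fun τ _ => ?_
      rw [Finset.sum_comm]
      simp
    _ = ((Fintype.card ν).factorial * ∑ σ, ‖f σ‖ ^ 2 : ℝ) := by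
      simp [hf, Fintype.card_perm, Finset.mul_sum, Complex.mul_conj']

end Moments

section ExteriorTracePolynomial

variable {ν ι κ α : Type*} [Fintype ν] [DecidableEq ν] [Fintype ι] [DecidableEq ι]
  [Fintype κ] [DecidableEq κ]

lemma sum_filter_injective_eq_sum_powersetCard [AddCommMonoid α] (f : (ν → ι) → α) :
    ∑ i : ν → ι with Function.Injective i, f i =
      ∑ s ∈ Finset.univ.powersetCard (Fintype.card ν), ∑ e : ν ≃ s, f (Subtype.val ∘ e) := by
  rw [Finset.sum_sigma']
  symm
  refine Finset.sum_bij (fun p _ => Subtype.val ∘ p.2) ?_ ?_ ?_ fun _ _ => rfl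
  · intro p _
    simpa using Subtype.val_injective.comp p.2.injective
  · rintro ⟨s, e⟩ _ ⟨t, f⟩ _ h
    have image_eq (u : Finset ι) (e : ν ≃ u) : Finset.univ.image (Subtype.val ∘ e) = u := by
      rw [← Finset.image_image, Finset.image_univ_equiv, Finset.univ_eq_attach,
        Finset.attach_image_val]
    obtain rfl : s = t := by
      rw [← image_eq s e, ← image_eq t f]
      exact congrArg (Finset.univ.image ·) h
    obtain rfl : e = f := Equiv.ext fun a => Subtype.ext (congrFun h a)
    rfl
  · intro i hi
    have hinj : Function.Injective i := (Finset.mem_filter.1 hi).2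
    let e : ν ≃ Finset.univ.image i :=
      (Equiv.ofInjective i hinj).trans (Equiv.subtypeEquivRight fun _ => by simp)
    refine ⟨⟨Finset.univ.image i, e⟩, ?_, rfl⟩
    simp [Finset.card_image_of_injective _ hinj]

variable [CommRing α]

/-- The polynomial `det (1 + X • A)`, whose coefficients are the traces of the exterior powers
of `A`. -/
noncomputable def exteriorTracePoly (A : Matrix ι ι α) : α[X] :=
  (1 + (X : α[X]) • A.map C).det

lemma charpolyRev_neg (A : Matrix ι ι α) : (-A).charpolyRev = exteriorTracePoly A := by
  rw [Matrix.charpolyRev, Matrix.map_neg C (map_neg C), smul_neg, sub_neg_eq_add,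
    exteriorTracePoly]

open scoped Kronecker in
variable (κ) in
lemma exteriorTracePoly_kronecker_one (A : Matrix ι ι α) :
    exteriorTracePoly (A ⊗ₖ (1 : Matrix κ κ α)) = exteriorTracePoly A ^ Fintype.card κ := by
  have h : (1 + (X : α[X]) • A.map C) ⊗ₖ (1 : Matrix κ κ α[X]) =
      1 + (X : α[X]) • (A ⊗ₖ (1 : Matrix κ κ α)).map C := by
    rw [Matrix.add_kronecker, Matrix.one_kronecker_one, Matrix.smul_kronecker]
    congr 2
    ext1 ⟨i, a⟩ ⟨j, b⟩
    by_cases h : a = b <;> simp [h]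
  rw [exteriorTracePoly, ← h, Matrix.det_kronecker, Matrix.det_one, one_pow, mul_one,
    exteriorTracePoly]

variable (ν) in
lemma factorial_mul_coeff_exteriorTracePoly_eq_sum_det (A : Matrix ι ι α) :
    (Fintype.card ν).factorial * (exteriorTracePoly A).coeff (Fintype.card ν) =
      ∑ i : ν → ι, (A.submatrix i i).det := by
  have injective_of_det_ne_zero (i : ν → ι) (h : (A.submatrix i i).det ≠ 0) :
      Function.Injective i := by
    intro a b hab
    by_contra hne
    exact h (Matrix.det_zero_of_row_eq hne (by ext; simp [hab]))
  rw [← Finset.sum_filter_of_ne fun i _ => injective_of_det_ne_zero i,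
    sum_filter_injective_eq_sum_powersetCard, exteriorTracePoly,
    Matrix.coeff_det_one_add_X_smul_eq_sum_minors, Finset.mul_sum]
  refine Finset.sum_congr rfl fun s hs => ?_
  have hcard : Fintype.card ν = Fintype.card s := by
    rw [Fintype.card_coe, (Finset.mem_powersetCard.1 hs).2]
  have det_comp (e : ν ≃ s) : (A.submatrix (Subtype.val ∘ e) (Subtype.val ∘ e)).det =
      (A.submatrix (Subtype.val : s → ι) Subtype.val).det := by
    rw [← Matrix.submatrix_submatrix, Matrix.det_submatrix_equiv_self]
  simp [det_comp, Fintype.card_equiv (Fintype.equivOfCardEq hcard)]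

variable (ν) in
lemma factorial_mul_coeff_exteriorTracePoly_eq_sum_permTrace (A : Matrix ι ι α) :
    (Fintype.card ν).factorial * (exteriorTracePoly A).coeff (Fintype.card ν) =
      ∑ σ : Equiv.Perm ν, (Equiv.Perm.sign σ : ℤ) * permTrace A σ := by
  simp only [factorial_mul_coeff_exteriorTracePoly_eq_sum_det, Matrix.det_apply',
    permTrace_eq_sum, Finset.mul_sum, Matrix.submatrix_apply]
  exact Finset.sum_comm

variable (ν κ) in
lemma factorial_mul_coeff_exteriorTracePoly_pow (A : Matrix ι ι α) :
    (Fintype.card ν).factorial *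
        (exteriorTracePoly A ^ Fintype.card κ).coeff (Fintype.card ν) =
      ∑ σ : Equiv.Perm ν, (Equiv.Perm.sign σ : ℤ) * permTrace (1 : Matrix κ κ α) σ *
        permTrace A σ := by
  rw [← exteriorTracePoly_kronecker_one, factorial_mul_coeff_exteriorTracePoly_eq_sum_permTrace]
  refine Finset.sum_congr rfl fun σ _ => ?_
  rw [permTrace_kronecker, mul_assoc, mul_comm (permTrace A σ)]

variable [StarRing α]

open scoped Matrix in
lemma charpolyRev_conjTranspose (A : Matrix ι ι α) :
    Aᴴ.charpolyRev = A.charpolyRev.map (starRingEnd α) := by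
  rw [Matrix.charpolyRev, Matrix.charpolyRev, ← Polynomial.coe_mapRingHom, RingHom.map_det,
    ← Matrix.det_transpose]
  congr 1
  ext1 i j
  simp [Matrix.one_apply, eq_comm, apply_ite, starRingEnd_apply]

open scoped Matrix in
lemma coeff_exteriorTracePoly_of_mem_unitaryGroup {U : Matrix ι ι α}
    (hU : U ∈ Matrix.unitaryGroup ι α) {i j : ℕ} (hij : i + j = Fintype.card ι) :
    (exteriorTracePoly U).coeff i = U.det * star ((exteriorTracePoly U).coeff j) := by
  nontriviality α
  have hmul : (-U)ᴴ * -U = 1 := by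
    simpa [Matrix.star_eq_conjTranspose] using Matrix.mem_unitaryGroup_iff'.1 hU
  have hcharpoly : (-U).charpoly = C U.det * (exteriorTracePoly U).map (starRingEnd α) := by
    have hdet : Ring.inverse (-U)ᴴ.det = (-U).det :=
      Ring.inverse_unit (.mkOfMulEqOne (-U)ᴴ.det (-U).det
        (by rw [← Matrix.det_mul, hmul, Matrix.det_one]))
    have h := Matrix.charpoly_inv (-U)ᴴ (IsUnit.of_mul_eq_one _ hmul)
    rw [Matrix.inv_eq_right_inv hmul, charpolyRev_conjTranspose, charpolyRev_neg, hdet,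
      Matrix.det_neg, C_mul, ← mul_assoc] at h
    simpa [← mul_pow] using h
  have coeff_eq : (exteriorTracePoly U).coeff i = (-U).charpoly.coeff j := by
    rw [← charpolyRev_neg, ← Matrix.reverse_charpoly, coeff_reverse,
      Matrix.charpoly_natDegree_eq_dim, revAt_le (by omega), ← hij, Nat.add_sub_cancel_left]
  rw [coeff_eq, hcharpoly, coeff_C_mul, coeff_map, starRingEnd_apply]

lemma norm_coeff_exteriorTracePoly_of_mem_unitaryGroup {U : Matrix ι ι ℂ}
    (hU : U ∈ Matrix.unitaryGroup ι ℂ) {i j : ℕ} (hij : i + j = Fintype.card ι) :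
    ‖(exteriorTracePoly U).coeff i‖ = ‖(exteriorTracePoly U).coeff j‖ := by
  rw [coeff_exteriorTracePoly_of_mem_unitaryGroup hU hij, norm_mul, norm_star,
    CStarRing.norm_of_mem_unitary (Matrix.det_of_mem_unitary hU), one_mul]

end ExteriorTracePolynomial

section MatrixIntegral

lemma coeff_prod_eq_sum_antidiagonalTuple {α : Type*} [CommSemiring α] {k : ℕ}
    (p : Fin k → α[X]) (n : ℕ) :
    (∏ i, p i).coeff n = ∑ x ∈ Finset.Nat.antidiagonalTuple k n, ∏ i, (p i).coeff (x i) := by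
  rw [← Polynomial.coeff_coe, ← Polynomial.coeToPowerSeries.ringHom_apply, map_prod,
    PowerSeries.coeff_prod]
  refine Finset.sum_equiv Finsupp.equivFunOnFinite (fun x => ?_) fun x _ => ?_
  · simp [Finset.Nat.mem_antidiagonalTuple]
  · simp

variable {R : ℕ}

lemma sum_prod_extPowTrace_eq_coeff (k n : ℕ) (θ : Matrix.unitaryGroup (Fin R) ℂ) :
    ∑ x ∈ Finset.Nat.antidiagonalTuple k n, ∏ i, extPowTrace R θ (x i) =
      (exteriorTracePoly θ.1 ^ k).coeff n := by
  rw [← Fin.prod_const, coeff_prod_eq_sum_antidiagonalTuple]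
  rfl

lemma matrixIntegral_eq_of_add_eq (μ : Measure (Matrix.unitaryGroup (Fin R) ℂ)) {k n m : ℕ}
    (h : n + m = k * R) : matrixIntegral k n R μ = matrixIntegral k m R μ := by
  have norm_coeff (θ : Matrix.unitaryGroup (Fin R) ℂ) :
      ‖(exteriorTracePoly θ.1 ^ k).coeff n‖ = ‖(exteriorTracePoly θ.1 ^ k).coeff m‖ := by
    have hpow := exteriorTracePoly_kronecker_one (Fin k) θ.1
    rw [Fintype.card_fin] at hpow
    rw [← hpow]
    refine norm_coeff_exteriorTracePoly_of_mem_unitaryGroup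
      (Matrix.kronecker_mem_unitary θ.2 (one_mem _)) ?_
    simp [h, mul_comm]
  simp only [matrixIntegral, sum_prod_extPowTrace_eq_coeff, norm_coeff]

variable (μ : Measure (Matrix.unitaryGroup (Fin R) ℂ)) [IsProbabilityMeasure μ]
  [μ.IsMulLeftInvariant]

lemma matrixIntegral_of_le (k : ℕ) {n : ℕ} (hn : n ≤ R) :
    matrixIntegral k n R μ = (k ^ 2).multichoose n := by
  let f (σ : Equiv.Perm (Fin n)) : ℂ :=
    (Equiv.Perm.sign σ : ℤ) * permTrace (1 : Matrix (Fin k) (Fin k) ℂ) σ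
  have f_conj (ρ σ : Equiv.Perm (Fin n)) : f (ρ * σ * ρ⁻¹) = f σ := by
    simp [f, permTrace_conj, mul_right_comm _ (Equiv.Perm.sign σ)]
  have sum_norm_sq : ∑ σ, ‖f σ‖ ^ 2 = (k ^ 2).multichoose n * n.factorial := by
    have norm_sq (σ : Equiv.Perm (Fin n)) :
        ‖f σ‖ ^ 2 = permTrace (1 : Matrix (Fin k) (Fin k) ℝ) σ ^ 2 := by
      rw [norm_mul, Complex.norm_intCast, permTrace_one, permTrace_one, Complex.norm_natCast]
      obtain h | h := Int.units_eq_one_or (Equiv.Perm.sign σ) <;> simp [h]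
    simp_rw [norm_sq, sum_permTrace_one_sq, Fintype.card_fin]
  have norm_coeff_sq (θ : Matrix.unitaryGroup (Fin R) ℂ) :
      ‖(exteriorTracePoly θ.1 ^ k).coeff n‖ ^ 2 =
        ((n.factorial : ℝ) ^ 2)⁻¹ * ‖∑ σ, f σ * permTrace θ.1 σ‖ ^ 2 := by
    have h := factorial_mul_coeff_exteriorTracePoly_pow (Fin n) (Fin k) θ.1
    rw [Fintype.card_fin, Fintype.card_fin] at h
    rw [← h, norm_mul, Complex.norm_natCast, mul_pow, inv_mul_cancel_left₀ (by positivity)]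
  simp only [matrixIntegral, sum_prod_extPowTrace_eq_coeff, norm_coeff_sq]
  rw [integral_const_mul, integral_norm_sq_sum_mul_permTrace μ (by simpa using hn) f_conj,
    sum_norm_sq, Fintype.card_fin]
  field_simp

theorem I_two_eq_choose_general (k : ℕ) :
    (∀ n ≤ R, matrixIntegral k n R μ = (k ^ 2).multichoose n) ∧
      ∀ n m, n + m = k * R → m ≤ R → matrixIntegral k n R μ = (k ^ 2).multichoose m :=
  ⟨fun _ => matrixIntegral_of_le μ k,
    fun _ _ h hm => (matrixIntegral_eq_of_add_eq μ h).trans (matrixIntegral_of_le μ k hm)⟩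

end MatrixIntegral

lemma multichoose_four (n : ℕ) : Nat.multichoose 4 n = (n + 3).choose 3 := by
  rw [Nat.multichoose_eq, show 4 + n - 1 = n + 3 by omega, Nat.choose_symm_add]

theorem I_two_eq_choose (R : ℕ) (hR : 1 ≤ R)
    (μ : Measure (Matrix.unitaryGroup (Fin R) ℂ))
    (hμ : μ.IsHaarMeasure) (hprob : IsProbabilityMeasure μ) :
    (∀ n : ℕ, n ≤ R → matrixIntegral 2 n R μ = Nat.choose (n + 3) 3) ∧
    (∀ n : ℕ, R < n → n < 2 * R → matrixIntegral 2 n R μ = Nat.choose (2 * R - n + 3) 3) := by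
  simp only [← multichoose_four]
  obtain ⟨low, high⟩ := I_two_eq_choose_general μ 2
  exact ⟨low, fun n hn hn' => high n (2 * R - n) (by omega) (by omega)⟩
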